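/- The cluster picture Σ_f is almost rational if and only if every proper cluster s ∈ Σ_f satisfies at least one of the following: (a) d_s = ρ_s (equivalently, the smallest disc containing s contains a point of K); (b) there exist w ∈ K and a monic polynomial h with coefficients in the separable closure K^s of K whose set of roots (each of multiplicity one) is exactly {r − w : r ∈ s}, such that deg h = |s| is a power of p and the constant term c of h satisfies |v(c)|_p ≥ 1. -/

import Mathlib

open Polynomial
open scoped Classical

namespace ClusterPicture

variable {K Kbar : Type*} [Field K] [Field Kbar] [Algebra K Kbar]

lemma zero_lt_top' : (0 : WithTop ℚ) < ⊤ := by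
  simp

lemma withTop_add_pos {a b : WithTop ℚ} (ha : 0 ≤ a) (hb : 0 < b) : 0 < a + b := by
  rcases eq_or_ne a ⊤ with h | h
  · subst h; rw [top_add]; exact zero_lt_top'
  · lift a to ℚ using h
    rcases eq_or_ne b ⊤ with h' | h'
    · subst h'; rw [add_top]; exact zero_lt_top'
    · lift b to ℚ using h'
      have ha' : (0 : ℚ) ≤ a := by exact_mod_cast ha
      have hb' : (0 : ℚ) < b := by exact_mod_cast hb
      exact_mod_cast add_pos_of_nonneg_of_pos ha' hb'

/-- The setting of the paper: `K` is a complete discretely valued field, with valuation `v`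
normalised so that `v(K^×) = ℤ`, `Kbar` is an algebraic closure of `K`, and `v` is (the unique)
extension of the valuation to a `ℚ ∪ {∞}`-valued valuation on `Kbar`. -/
structure Setup (K Kbar : Type*) [Field K] [Field Kbar] [Algebra K Kbar] : Type _ where
  /-- the valuation on the algebraic closure -/
  v : Kbar → WithTop ℚ
  v_top_iff : ∀ x : Kbar, v x = ⊤ ↔ x = 0
  v_one : v 1 = 0
  v_neg : ∀ x : Kbar, v (-x) = v x
  v_mul : ∀ x y : Kbar, v (x * y) = v x + v y
  v_add : ∀ x y : Kbar, min (v x) (v y) ≤ v (x + y)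
  /-- the valuation is normalised: nonzero elements of `K` have integer valuation -/
  v_base_int : ∀ x : K, x ≠ 0 → ∃ n : ℤ, v (algebraMap K Kbar x) = ((n : ℚ) : WithTop ℚ)
  /-- the valuation is surjective onto `ℤ` on `K^×`: there is a uniformiser -/
  exists_uniformiser : ∃ π : K, v (algebraMap K Kbar π) = ((1 : ℚ) : WithTop ℚ)
  /-- `Kbar` is an algebraic closure of `K` -/
  algClosed : IsAlgClosed Kbar
  algebraic : Algebra.IsAlgebraic K Kbar
  /-- `K` is complete with respect to the valuation -/
  complete : ∀ a : ℕ → K,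
    (∀ q : ℚ, ∃ N : ℕ, ∀ m, N ≤ m → ∀ n, N ≤ n →
      ((q : ℚ) : WithTop ℚ) ≤ v (algebraMap K Kbar (a m - a n))) →
    ∃ b : K, ∀ q : ℚ, ∃ N : ℕ, ∀ n, N ≤ n →
      ((q : ℚ) : WithTop ℚ) ≤ v (algebraMap K Kbar (a n - b))

/-- Valuation of an element of the base field `K`. -/
def Setup.vK (S : Setup K Kbar) (x : K) : WithTop ℚ := S.v (algebraMap K Kbar x)

/-- The finite set of roots of `f` in the algebraic closure `Kbar`. -/
noncomputable def rootFinset (f : K[X]) : Finset Kbar :=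
  (f.map (algebraMap K Kbar)).roots.toFinset

/-- A cluster for `f`: a nonempty subset of the set of roots of `f` cut out by a `v`-adic disc. -/
def IsCluster (S : Setup K Kbar) (f : K[X]) (s : Finset Kbar) : Prop :=
  s.Nonempty ∧ ∃ (z : Kbar) (δ : ℚ),
    s = (rootFinset f).filter fun r => ((δ : ℚ) : WithTop ℚ) ≤ S.v (r - z)

/-- The depth `d_s = min_{r,r' ∈ s} v (r - r')` of a cluster. -/
noncomputable def depth (S : Setup K Kbar) (s : Finset Kbar) : WithTop ℚ :=
  s.inf fun r => s.inf fun r' => S.v (r - r')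

/-- `min_{r ∈ s} v (r - z)`, for `z ∈ Kbar`. -/
noncomputable def dmin (S : Setup K Kbar) (s : Finset Kbar) (z : Kbar) : WithTop ℚ :=
  s.inf fun r => S.v (r - z)

/-- `min_{r ∈ s} v (r - w)`, for `w ∈ K`. -/
noncomputable def dminK (S : Setup K Kbar) (s : Finset Kbar) (w : K) : WithTop ℚ :=
  dmin S s (algebraMap K Kbar w)

/-- `w ∈ K` is a rational centre of `s` if it maximises `min_{r ∈ s} v (r - w)`.
For a proper cluster `s` with rational centre `w`, the radius `ρ_s` is `dminK S s w`. -/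
def IsRationalCentre (S : Setup K Kbar) (s : Finset Kbar) (w : K) : Prop :=
  ∀ w' : K, dminK S s w' ≤ dminK S s w

/-- A rational cluster: a cluster cut out by a disc with centre in `K`. -/
def IsRationalCluster (S : Setup K Kbar) (f : K[X]) (s : Finset Kbar) : Prop :=
  s.Nonempty ∧ ∃ (w : K) (δ : ℚ),
    s = (rootFinset f).filter fun r => ((δ : ℚ) : WithTop ℚ) ≤ S.v (r - algebraMap K Kbar w)

/-- A cluster centred at `w ∈ K`. -/
def IsClusterCentredAt (S : Setup K Kbar) (f : K[X]) (w : K) (s : Finset Kbar) : Prop :=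
  s.Nonempty ∧ ∃ δ : ℚ,
    s = (rootFinset f).filter fun r => ((δ : ℚ) : WithTop ℚ) ≤ S.v (r - algebraMap K Kbar w)

/-- The cluster picture of `f` is almost rational: every proper cluster `s` with
`|s| > |ρ_s|_p` satisfies `d_s = ρ_s`. -/
def AlmostRational (S : Setup K Kbar) (f : K[X]) (p : ℕ) : Prop :=
  ∀ s : Finset Kbar, IsCluster S f s → 1 < s.card →
    ∀ (w : K) (ρ : ℚ), IsRationalCentre S s w → dminK S s w = ((ρ : ℚ) : WithTop ℚ) →
      padicNorm p ρ < (s.card : ℚ) → depth S s = ((ρ : ℚ) : WithTop ℚ)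

/-- The slope of the `j`-th edge of the polygon with vertices `(i_j, c_j)`. -/
def NPslope {s : ℕ} (i : Fin (s + 1) → ℕ) (c : Fin (s + 1) → ℚ) (j : Fin s) : ℚ :=
  (c j.succ - c j.castSucc) / ((i j.succ : ℚ) - (i j.castSucc : ℚ))

/-- `(i_0, c_0), …, (i_s, c_s)` are the vertices of the Newton polygon of `f`:
the points `(i_j, c_j)` are among the points `(m, v(a_m))`, the first and last vertices lie
above the trailing and leading coefficients, the slopes of consecutive edges strictly
increase, and every point `(m, v(a_m))` lies on or above (the line spanned by) every edge. -/
structure IsNPVertices (S : Setup K Kbar) (f : K[X]) (s : ℕ)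
    (i : Fin (s + 1) → ℕ) (c : Fin (s + 1) → ℚ) : Prop where
  mono : StrictMono i
  first : i 0 = f.natTrailingDegree
  last : i (Fin.last s) = f.natDegree
  vert : ∀ j, S.vK (f.coeff (i j)) = ((c j : ℚ) : WithTop ℚ)
  slope_mono : StrictMono (NPslope i c)
  support : ∀ (j : Fin s) (m : ℕ) (q : ℚ), S.vK (f.coeff m) = ((q : ℚ) : WithTop ℚ) →
    (c j.succ - c j.castSucc) * ((m : ℚ) - (i j.castSucc : ℚ)) ≤
      (q - c j.castSucc) * ((i j.succ : ℚ) - (i j.castSucc : ℚ))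

/-- The valuation ring of `Kbar`. -/
def intRing (S : Setup K Kbar) : Subring Kbar where
  carrier := {x : Kbar | (0 : WithTop ℚ) ≤ S.v x}
  zero_mem' := by
    simp only [Set.mem_setOf_eq, (S.v_top_iff 0).mpr rfl]
    exact le_top
  one_mem' := by
    simp only [Set.mem_setOf_eq, S.v_one]
    exact le_refl _
  add_mem' := by
    intro a b ha hb
    exact le_trans (le_min ha hb) (S.v_add a b)
  mul_mem' := by
    intro a b ha hb
    simp only [Set.mem_setOf_eq, S.v_mul a b]
    exact add_nonneg ha hb
  neg_mem' := by
    intro a ha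
    simpa only [Set.mem_setOf_eq, S.v_neg] using ha

lemma mem_intRing {S : Setup K Kbar} {x : Kbar} :
    x ∈ intRing S ↔ (0 : WithTop ℚ) ≤ S.v x := Iff.rfl

/-- The maximal ideal of the valuation ring of `Kbar`. -/
def maxIdeal (S : Setup K Kbar) : Ideal (intRing S) where
  carrier := {x : intRing S | (0 : WithTop ℚ) < S.v (x : Kbar)}
  zero_mem' := by
    show (0 : WithTop ℚ) < S.v ((0 : intRing S) : Kbar)
    rw [show ((0 : intRing S) : Kbar) = 0 from rfl, (S.v_top_iff 0).mpr rfl]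
    exact zero_lt_top'
  add_mem' := by
    intro a b ha hb
    show (0 : WithTop ℚ) < S.v ((a : Kbar) + (b : Kbar))
    exact lt_of_lt_of_le (lt_min ha hb) (S.v_add _ _)
  smul_mem' := by
    intro c x hx
    show (0 : WithTop ℚ) < S.v ((c : Kbar) * (x : Kbar))
    rw [S.v_mul]
    exact withTop_add_pos c.2 hx

/-- The residue field of `Kbar`; it is an algebraic closure of the residue field `k` of `K`. -/
abbrev Residue (S : Setup K Kbar) : Type _ := intRing S ⧸ maxIdeal S

/-- Reduction to the residue field (with junk value `0` on non-integral elements). -/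
noncomputable def red (S : Setup K Kbar) (x : Kbar) : Residue S :=
  if h : (0 : WithTop ℚ) ≤ S.v x then Ideal.Quotient.mk (maxIdeal S) ⟨x, mem_intRing.mpr h⟩
  else 0

/-- The reduction `f̄|_L` of `f` along the edge `L` of its Newton polygon with endpoints
`(i₁, q₁)` and `(i₂, q₂)`, of slope `ρ = nρ / n` where `n` is the denominator of `ρ`;
`π` is a uniformiser of `K`.  This is the reduction of `π^{-q₁}·(f|_L)(π^{-nρ}·x)`, where
`f|_L (x) = ∑_j a_{n j + i₁} x^j`. -/
noncomputable def redEdge (S : Setup K Kbar) (π : K) (f : K[X])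
    (i₁ i₂ : ℕ) (q₁ nρ : ℤ) (n : ℕ) : Polynomial (Residue S) :=
  ∑ j ∈ Finset.range ((i₂ - i₁) / n + 1),
    Polynomial.C (red S (algebraMap K Kbar (f.coeff (n * j + i₁)) *
      (algebraMap K Kbar π) ^ (-(q₁ + (j : ℤ) * nρ)))) * Polynomial.X ^ j

/-- `f` is NP-regular (`Δ_v`-regular in dimension 1): for every edge `L` of its Newton
polygon, the reduction `f̄|_L` has no multiple roots in the algebraic closure of the residue
field, i.e. is separable. -/
def NPRegular (S : Setup K Kbar) (π : K) (f : K[X]) : Prop :=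
  ∀ (s : ℕ) (i : Fin (s + 1) → ℕ) (c : Fin (s + 1) → ℚ),
    IsNPVertices S f s i c →
    ∀ (j : Fin s) (q₁ nρ : ℤ) (n : ℕ),
      (q₁ : ℚ) = c j.castSucc →
      n = (NPslope i c j).den →
      (nρ : ℚ) = (n : ℚ) * NPslope i c j →
      (redEdge S π f (i j.castSucc) (i j.succ) q₁ nρ n).Separable

/-- The vertex-index function of the Newton polygon of `f(x+w)`, in terms of the sizes of
the clusters `s_1 ⊂ … ⊂ s_{n+1}` centred at `w`; here `t` is the prescribed first index. -/
def vertIdx {n : ℕ} (t : ℕ) (s : Fin (n + 1) → Finset Kbar) : Fin (n + 2) → ℕ :=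
  fun j => Fin.cases (motive := fun _ => ℕ) t (fun j' => (s j').card) j

/-- The vertex-value function of the Newton polygon of `f(x+w)`: the vertex over `|s_j|` has
second coordinate `ε_{s_j} - |s_j|·ρ_{s_j}`; `c0` is the prescribed value at the first vertex. -/
def vertVal {n : ℕ} (c0 : ℚ) (s : Fin (n + 1) → Finset Kbar) (ρ ε : Fin (n + 1) → ℚ) :
    Fin (n + 2) → ℚ :=
  fun j => Fin.cases (motive := fun _ => ℚ) c0 (fun j' => ε j' - ((s j').card : ℚ) * ρ j') j

/-!
Let `s` be a proper cluster with rational centre `w` and radius `ρ < d_s`, and let `r ∈ s`.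
The roots of `f` in the open disc `v(x - r) > ρ` form a cluster `t ⊇ s` of the same radius and of
depth larger than `ρ`, so almost rationality gives `|t| ≤ |ρ|_p ≤ p ^ m`, where `p ^ m` is the
`p`-part of the denominator of `ρ`.

On the other hand, all conjugates `y` of `x = r - w` have valuation `ρ`, and the `k`-th elementary
symmetric function of the quotients `y / x` is a unit only if `k * ρ` is an integer. Hence their
residues are the roots of a polynomial in `T ^ p ^ m`, and `p ^ m` divides the number of conjugates
with `v(y - x) > ρ`, all of which belong to `t - w`. So `|t| = p ^ m` and `t` consists of conjugates
of `r`. Conjugation preserves discs, so `t` is a disjoint union of discs with as many roots as `s`,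
and `|s|` divides `p ^ m`.

Since every `r ∈ s` has `v(r - w) = ρ`, the constant term of `∏ (x - (r - w))` has valuation
`|s| * ρ`; for `|s|` a power of `p`, its `p`-adic absolute value is at least `1` iff `|s| ≤ |ρ|_p`.
For a point of `K` that is not a rational centre the corresponding valuation is an integer,
so only rational centres can satisfy (b).
-/

section SymmetricFunctions

theorem multiset_esymm_map {R T : Type*} [CommSemiring R] [CommSemiring T] (φ : R →+* T)
    (U : Multiset R) (k : ℕ) : (U.map φ).esymm k = φ (U.esymm k) := by
  simp only [Multiset.esymm, Multiset.powersetCard_map, Multiset.map_map, Function.comp_def,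
    map_multiset_sum, map_multiset_prod]

theorem multiset_esymm_map_mul_left {R : Type*} [CommSemiring R] (a : R) (U : Multiset R) (k : ℕ) :
    (U.map (a * ·)).esymm k = a ^ k * U.esymm k :=
  (Multiset.pow_smul_esymm a k U).symm

theorem multiset_esymm_eq_zero_of_card_lt {R : Type*} [CommSemiring R] {U : Multiset R} {k : ℕ}
    (hk : U.card < k) : U.esymm k = 0 := by
  rw [Multiset.esymm, Multiset.powersetCard_eq_empty k hk, Multiset.map_zero, Multiset.sum_zero]

theorem multiset_esymm_card {R : Type*} [CommSemiring R] (U : Multiset R) :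
    U.esymm U.card = U.prod := by
  rw [Multiset.esymm, Multiset.powersetCard_self, Multiset.map_singleton, Multiset.sum_singleton]

theorem esymm_aroots_mem_range {F L : Type*} [Field F] [Field L] [Algebra F L] {P : F[X]}
    (hP : P.Monic) (hs : (P.map (algebraMap F L)).Splits) (k : ℕ) :
    (P.aroots L).esymm k ∈ (algebraMap F L).range := by
  rcases lt_or_ge (P.aroots L).card k with hk | hk
  · rw [multiset_esymm_eq_zero_of_card_lt hk]
    exact zero_mem _
  · have hcoeff : algebraMap F L (P.coeff ((P.aroots L).card - k)) =
        (-1) ^ k * (P.aroots L).esymm k := by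
      rw [← coeff_map, hs.eq_prod_roots_of_monic (hP.map _), Multiset.prod_X_sub_C_coeff _
        (Nat.sub_le _ _), Nat.sub_sub_self hk]
    refine ⟨(-1) ^ k * P.coeff ((P.aroots L).card - k), ?_⟩
    rw [map_mul, map_pow, map_neg, map_one, hcoeff, ← mul_assoc, ← mul_pow, neg_one_mul, neg_neg,
      one_pow, one_mul]

variable {R : Type*} [CommRing R] {p : ℕ} [Fact p.Prime] [CharP R p] {m : ℕ}

theorem pow_dvd_rootMultiplicity_of_forall_coeff {P : R[X]}
    (hP : ∀ k, P.coeff k ≠ 0 → p ^ m ∣ k) (a : R) : p ^ m ∣ P.rootMultiplicity a := by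
  have hpos : 0 < p ^ m := pow_pos (Fact.out : p.Prime).pos m
  have hexpand : P = expand R (p ^ m) (contract (p ^ m) P) := by
    ext k
    rw [coeff_expand hpos]
    split_ifs with hk
    · rw [coeff_contract hpos.ne', Nat.div_mul_cancel hk]
    · exact of_not_not fun h => hk (hP k h)
  rw [hexpand, rootMultiplicity_expand_pow]
  exact dvd_mul_right _ _

theorem pow_dvd_count_of_forall_esymm [IsDomain R] {U : Multiset R} (h0 : (0 : R) ∉ U)
    (hU : ∀ k, U.esymm k ≠ 0 → p ^ m ∣ k) (a : R) : p ^ m ∣ U.count a := by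
  have hcard : p ^ m ∣ U.card := hU _ (multiset_esymm_card U ▸ Multiset.prod_ne_zero h0)
  rw [← roots_multiset_prod_X_sub_C U, count_roots]
  refine pow_dvd_rootMultiplicity_of_forall_coeff (fun k hk => ?_) a
  have hle : k ≤ U.card := by
    rw [← natDegree_multiset_prod_X_sub_C_eq_card]
    exact le_natDegree_of_ne_zero hk
  rw [Multiset.prod_X_sub_C_coeff U hle] at hk
  exact (Nat.dvd_sub_iff_right hle hcard).1 (hU _ (right_ne_zero_of_mul hk))

end SymmetricFunctions

section Valuation

variable (S : Setup K Kbar)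

/-- The valuation of the setting as an `AddValuation`, through which Mathlib's theory of
valuations applies to `S.v`. -/
def Setup.addVal : AddValuation Kbar (WithTop ℚ) :=
  .of S.v ((S.v_top_iff 0).2 rfl) S.v_one S.v_add S.v_mul

theorem Setup.v_zero : S.v 0 = ⊤ := S.addVal.map_zero

theorem Setup.v_pow (x : Kbar) (n : ℕ) : S.v (x ^ n) = n • S.v x := S.addVal.map_pow x n

theorem Setup.v_sub_comm (x y : Kbar) : S.v (x - y) = S.v (y - x) := S.addVal.map_sub_swap x y

theorem Setup.v_multiset_prod (U : Multiset Kbar) : S.v U.prod = (U.map S.v).sum := by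
  induction U using Multiset.induction_on with
  | empty => exact S.v_one
  | cons x U ih => rw [Multiset.prod_cons, S.v_mul, ih, Multiset.map_cons, Multiset.sum_cons]

variable {S}

theorem Setup.v_ne_top {x : Kbar} (hx : x ≠ 0) : S.v x ≠ ⊤ := mt (S.v_top_iff x).1 hx

theorem Setup.v_eq_of_lt_sub {x y : Kbar} (h : S.v x < S.v (y - x)) : S.v y = S.v x :=
  S.addVal.map_eq_of_lt_sub h

theorem Setup.le_v_sub_of_le_sub {x y z : Kbar} {a : WithTop ℚ} (hx : a ≤ S.v (x - z))
    (hy : a ≤ S.v (y - z)) : a ≤ S.v (x - y) := by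
  rw [← sub_sub_sub_cancel_right x y z]
  exact S.addVal.map_le_sub hx hy

theorem Setup.v_inv_mul (x y : Kbar) : S.v (x⁻¹ * y) = S.v y - S.v x := by
  rw [mul_comm, ← div_eq_mul_inv]
  exact S.addVal.map_div

theorem Setup.v_eq_intCast_of_mem_range {x : Kbar} (hx : x ∈ (algebraMap K Kbar).range)
    (hx0 : x ≠ 0) : ∃ n : ℤ, S.v x = ((n : ℚ) : WithTop ℚ) := by
  obtain ⟨y, rfl⟩ := hx
  exact S.v_base_int y fun hy => hx0 (by rw [hy, map_zero])

end Valuation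

section Conjugates

/-- The order-reversing map `a ↦ 2 ^ (-a)`, with `⊤ ↦ 0`, which turns additive valuations into
absolute values. -/
noncomputable def negExp (a : WithTop ℚ) : ℝ := a.recTopCoe 0 fun q => (2 : ℝ) ^ (-(q : ℝ))

theorem negExp_top : negExp ⊤ = 0 := rfl

theorem negExp_coe (q : ℚ) : negExp (q : WithTop ℚ) = (2 : ℝ) ^ (-(q : ℝ)) := rfl

theorem negExp_nonneg (a : WithTop ℚ) : 0 ≤ negExp a := by
  cases a with
  | top => exact le_rfl
  | coe q => exact (Real.rpow_pos_of_pos two_pos _).le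

theorem negExp_add (a b : WithTop ℚ) : negExp (a + b) = negExp a * negExp b := by
  cases a with
  | top => rw [top_add, negExp_top, zero_mul]
  | coe q =>
    cases b with
    | top => rw [add_top, negExp_top, mul_zero]
    | coe r =>
      rw [← WithTop.coe_add, negExp_coe, negExp_coe, negExp_coe, ← Real.rpow_add two_pos,
        Rat.cast_add, neg_add]

theorem negExp_strictAnti : StrictAnti negExp := by
  intro a b hab
  lift a to ℚ using hab.ne_top
  cases b with
  | top => exact Real.rpow_pos_of_pos two_pos _
  | coe r =>
    refine Real.rpow_lt_rpow_of_exponent_lt one_lt_two (neg_lt_neg ?_)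
    exact_mod_cast hab

variable (S : Setup K Kbar)

theorem negExp_v_add_le (x y : Kbar) :
    negExp (S.v (x + y)) ≤ max (negExp (S.v x)) (negExp (S.v y)) := by
  rw [← negExp_strictAnti.antitone.map_min]
  exact negExp_strictAnti.antitone (S.v_add x y)

/-- The absolute value `x ↦ 2 ^ (-v x)` on the algebraic closure. -/
noncomputable def Setup.absoluteValue : AbsoluteValue Kbar ℝ where
  toFun x := negExp (S.v x)
  map_mul' x y := by rw [S.v_mul, negExp_add]
  nonneg' x := negExp_nonneg _
  eq_zero' x := by rw [← negExp_top, negExp_strictAnti.injective.eq_iff, S.v_top_iff]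
  add_le' x y := (negExp_v_add_le S x y).trans
    (max_le_add_of_nonneg (negExp_nonneg _) (negExp_nonneg _))

theorem Setup.absoluteValue_apply (x : Kbar) : S.absoluteValue x = negExp (S.v x) := rfl

/-- The norm `x ↦ 2 ^ (-v x)` on the base field. -/
@[reducible]
noncomputable def Setup.nontriviallyNormedField : NontriviallyNormedField K where
  __ := (S.absoluteValue.comp (algebraMap K Kbar).injective).toNormedField
  non_trivial := by
    obtain ⟨π, hπ⟩ := S.exists_uniformiser
    refine ⟨π⁻¹, ?_⟩
    change 1 < S.absoluteValue (algebraMap K Kbar π⁻¹)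
    rw [map_inv₀, map_inv₀, S.absoluteValue_apply, hπ, negExp_coe, Rat.cast_one, Real.rpow_neg_one,
      inv_inv]
    exact one_lt_two

theorem Setup.norm_eq (x : K) :
    letI := S.nontriviallyNormedField
    ‖x‖ = negExp (S.v (algebraMap K Kbar x)) := rfl

theorem Setup.isUltrametricDist :
    letI := S.nontriviallyNormedField
    IsUltrametricDist K := by
  let := S.nontriviallyNormedField
  refine IsUltrametricDist.isUltrametricDist_of_isNonarchimedean_norm fun x y => ?_
  rw [S.norm_eq, map_add]
  exact negExp_v_add_le S _ _

theorem Setup.completeSpace :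
    letI := S.nontriviallyNormedField
    CompleteSpace K := by
  let := S.nontriviallyNormedField
  refine Metric.complete_of_cauchySeq_tendsto fun u hu => ?_
  rw [Metric.cauchySeq_iff] at hu
  obtain ⟨b, hb⟩ := S.complete u fun q => by
    obtain ⟨N, hN⟩ := hu (negExp q) (Real.rpow_pos_of_pos two_pos _)
    refine ⟨N, fun m hm n hn => ?_⟩
    have hdist := hN m hm n hn
    rw [dist_eq_norm, S.norm_eq] at hdist
    exact (negExp_strictAnti.lt_iff_gt.1 hdist).le
  refine ⟨b, Metric.tendsto_atTop.2 fun ε hε => ?_⟩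
  obtain ⟨k, hk⟩ := exists_pow_lt_of_lt_one hε (inv_lt_one_of_one_lt₀ (one_lt_two (α := ℝ)))
  obtain ⟨N, hN⟩ := hb k
  refine ⟨N, fun n hn => lt_of_le_of_lt ?_ hk⟩
  calc dist (u n) b = negExp (S.v (algebraMap K Kbar (u n - b))) := by
        rw [dist_eq_norm, S.norm_eq]
    _ ≤ negExp ((k : ℚ) : WithTop ℚ) := negExp_strictAnti.antitone (hN n hn)
    _ = (2⁻¹ : ℝ) ^ k := by
        rw [negExp_coe, Rat.cast_natCast, Real.rpow_neg two_pos.le, Real.rpow_natCast, inv_pow]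

variable {S}

theorem v_eq_of_isConjRoot {x y : Kbar} (h : IsConjRoot K x y) : S.v x = S.v y := by
  let := S.nontriviallyNormedField
  have := S.isUltrametricDist
  have := S.completeSpace
  have := S.algebraic
  have hspectral (z : Kbar) : S.absoluteValue z = spectralNorm K Kbar z :=
    spectralNorm_unique_field_norm_ext (fun a => (S.norm_eq a).symm) z
  refine negExp_strictAnti.injective ?_
  rw [← S.absoluteValue_apply, ← S.absoluteValue_apply, hspectral, hspectral, spectralNorm,
    spectralNorm, isConjRoot_def.1 h]

end Conjugates

section Residue

variable (S : Setup K Kbar)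

theorem v_eq_zero_of_notMem_maxIdeal {x : intRing S} (hx : x ∉ maxIdeal S) : S.v x = 0 :=
  (not_lt.1 hx).antisymm x.2

instance maxIdeal_isPrime : (maxIdeal S).IsPrime where
  ne_top' := (Ideal.ne_top_iff_one _).2 fun h : 0 < S.v 1 => h.ne' S.v_one
  mem_or_mem' {x y} hxy := by
    by_contra! h
    have hmul : 0 < S.v (x * y : Kbar) := hxy
    rw [S.v_mul, v_eq_zero_of_notMem_maxIdeal S h.1, v_eq_zero_of_notMem_maxIdeal S h.2,
      add_zero] at hmul
    exact hmul.false

variable {S} {p : ℕ}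

theorem charP_residue (hp : p.Prime) (hres : 0 < S.vK (p : K)) : CharP (Residue S) p := by
  rw [CharP.charP_iff_prime_eq_zero hp, ← map_natCast (Ideal.Quotient.mk (maxIdeal S)),
    Ideal.Quotient.eq_zero_iff_mem]
  rwa [Setup.vK, map_natCast] at hres

theorem pow_dvd_card_filter_v_sub_pos (hp : p.Prime) (hres : 0 < S.vK (p : K)) {m : ℕ}
    {U : Multiset Kbar} (hU : ∀ u ∈ U, S.v u = 0) (hm : ∀ k, S.v (U.esymm k) = 0 → p ^ m ∣ k)
    {a : Kbar} (ha : 0 ≤ S.v a) : p ^ m ∣ (U.filter fun u => 0 < S.v (u - a)).card := by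
  have : Fact p.Prime := ⟨hp⟩
  have := charP_residue hp hres
  lift U to Multiset (intRing S) using fun u hu => (hU u hu).ge
  lift a to intRing S using ha
  let φ := Ideal.Quotient.mk (maxIdeal S)
  have hcount : (U.map φ).count (φ a) =
      ((U.map (↑)).filter fun u : Kbar => 0 < S.v (u - a)).card := by
    rw [Multiset.count_map, Multiset.filter_map, Multiset.card_map]
    exact congrArg _ (Multiset.filter_congr fun u _ => eq_comm.trans Ideal.Quotient.eq)
  rw [← hcount]
  refine pow_dvd_count_of_forall_esymm ?_ (fun k hk => hm k ?_) _
  · intro h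
    obtain ⟨u, hu, hu0⟩ := Multiset.mem_map.1 h
    have hpos : 0 < S.v u := Ideal.Quotient.eq_zero_iff_mem.1 hu0
    exact hpos.ne' (hU u (Multiset.mem_map_of_mem _ hu))
  · rw [multiset_esymm_map] at hk
    have hesymm : (U.map (↑)).esymm k = ((U.esymm k : intRing S) : Kbar) :=
      multiset_esymm_map (intRing S).subtype U k
    rw [hesymm]
    exact v_eq_zero_of_notMem_maxIdeal S (mt Ideal.Quotient.eq_zero_iff_mem.2 hk)

theorem den_dvd_of_natCast_mul_eq_intCast {q : ℚ} {k : ℕ} {n : ℤ} (h : k * q = n) : q.den ∣ k := by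
  have hnum : (k * q.num : ℤ) = n * q.den := by
    have : (k * q.num : ℚ) = n * q.den := by rw [← q.mul_den_eq_num, ← mul_assoc, h]
    exact_mod_cast this
  refine q.reduced.symm.dvd_of_dvd_mul_right ⟨n.natAbs, ?_⟩
  simpa only [Int.natAbs_mul, Int.natAbs_natCast, mul_comm n.natAbs] using congrArg Int.natAbs hnum

theorem exists_intCast_eq_natCast_mul_of_mem_range {x y : Kbar} {q : ℚ} {k : ℕ} (hx : S.v x = q)
    (hy : y ∈ (algebraMap K Kbar).range) (h : S.v y = k • S.v x) : ∃ n : ℤ, k * q = n := by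
  rw [hx, ← WithTop.coe_nsmul, nsmul_eq_mul] at h
  obtain ⟨n, hn⟩ := Setup.v_eq_intCast_of_mem_range hy (by
    rintro rfl
    exact WithTop.coe_ne_top (h.symm.trans S.v_zero))
  exact ⟨n, WithTop.coe_injective (h.symm.trans hn)⟩

/-- The residues of `y / x`, for `y` conjugate to `x`, are the roots of a polynomial in
`T ^ p ^ m`: its `k`-th coefficient is the residue of a symmetric function divided by a power
of `x`, a unit only if `k * v x` is an integer. -/
theorem pow_dvd_card_filter_conjugates (hp : p.Prime) (hres : 0 < S.vK (p : K)) {x : Kbar} {ρ : ℚ}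
    (hx : S.v x = ρ) {m : ℕ} (hm : p ^ m ∣ ρ.den) :
    p ^ m ∣ (((minpoly K x).aroots Kbar).filter fun y => S.v x < S.v (y - x)).card := by
  have := S.algClosed
  have hint : IsIntegral K x := (S.algebraic.isAlgebraic x).isIntegral
  have hx0 : x ≠ 0 := by
    rintro rfl
    exact WithTop.coe_ne_top (hx.symm.trans S.v_zero)
  set A := (minpoly K x).aroots Kbar
  have hA {y : Kbar} (hy : y ∈ A) : S.v y = S.v x :=
    (v_eq_of_isConjRoot ((isConjRoot_iff_mem_minpoly_aroots hint).2 hy)).symm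
  have hcard : (A.filter fun y => S.v x < S.v (y - x)).card =
      ((A.map (x⁻¹ * ·)).filter fun u => 0 < S.v (u - 1)).card := by
    rw [Multiset.filter_map, Multiset.card_map]
    refine congrArg _ (Multiset.filter_congr fun y _ => ?_)
    rw [← inv_mul_cancel₀ hx0, Function.comp_apply, ← mul_sub, Setup.v_inv_mul,
      LinearOrderedAddCommGroupWithTop.sub_pos, or_iff_left (Setup.v_ne_top hx0)]
  rw [hcard]
  refine pow_dvd_card_filter_v_sub_pos hp hres ?_ (fun k hk => hm.trans ?_) S.v_one.ge
  · intro u hu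
    obtain ⟨y, hy, rfl⟩ := Multiset.mem_map.1 hu
    rw [Setup.v_inv_mul, hA hy, LinearOrderedAddCommGroupWithTop.sub_eq_zero (Setup.v_ne_top hx0)]
  · rw [multiset_esymm_map_mul_left, inv_pow, Setup.v_inv_mul,
      LinearOrderedAddCommGroupWithTop.sub_eq_zero (Setup.v_ne_top (pow_ne_zero k hx0)),
      S.v_pow] at hk
    obtain ⟨n, hn⟩ := exists_intCast_eq_natCast_mul_of_mem_range hx
      (esymm_aroots_mem_range (minpoly.monic hint) (IsAlgClosed.splits _) k) hk
    exact den_dvd_of_natCast_mul_eq_intCast hn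

end Residue

section Clusters

variable {S : Setup K Kbar} {s : Finset Kbar} {r r' : Kbar} {w : K} {a : WithTop ℚ}

theorem depth_le (hr : r ∈ s) (hr' : r' ∈ s) : depth S s ≤ S.v (r - r') :=
  (Finset.inf_le hr).trans (Finset.inf_le hr')

theorem le_depth_of_forall_le_v_sub (h : ∀ r ∈ s, a ≤ S.v (r - r')) : a ≤ depth S s :=
  Finset.le_inf fun _ hx => Finset.le_inf fun _ hy => Setup.le_v_sub_of_le_sub (h _ hx) (h _ hy)

theorem dminK_le (hr : r ∈ s) : dminK S s w ≤ S.v (r - algebraMap K Kbar w) := Finset.inf_le hr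

theorem dminK_le_depth : dminK S s w ≤ depth S s :=
  le_depth_of_forall_le_v_sub fun _ => dminK_le

theorem exists_v_sub_eq_dminK (hs : s.Nonempty) :
    ∃ r ∈ s, S.v (r - algebraMap K Kbar w) = dminK S s w :=
  let ⟨r, hr, h⟩ := s.exists_mem_eq_inf hs fun r => S.v (r - algebraMap K Kbar w)
  ⟨r, hr, h.symm⟩

theorem v_sub_eq_dminK_of_lt_depth (h : dminK S s w < depth S s) (hr : r ∈ s) :
    S.v (r - algebraMap K Kbar w) = dminK S s w := by
  obtain ⟨r₀, hr₀, hv⟩ := exists_v_sub_eq_dminK (S := S) (w := w) ⟨r, hr⟩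
  rw [← hv]
  refine Setup.v_eq_of_lt_sub ?_
  rw [sub_sub_sub_cancel_right, hv]
  exact h.trans_le (depth_le hr hr₀)

theorem depth_lt_top (hs : 1 < s.card) : depth S s < ⊤ := by
  obtain ⟨x, hx, y, hy, hxy⟩ := Finset.one_lt_card.1 hs
  exact (depth_le hx hy).trans_lt (Setup.v_ne_top (sub_ne_zero.2 hxy)).lt_top

theorem exists_rat_dminK_eq (hs : 1 < s.card) : ∃ q : ℚ, dminK S s w = q :=
  ⟨_, (WithTop.coe_untop _ (dminK_le_depth.trans_lt (depth_lt_top hs)).ne).symm⟩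

end Clusters

section RationalCentre

variable {S : Setup K Kbar}

theorem exists_intCast_eq_natDegree_minpoly_mul {x : Kbar} {q : ℚ} (hx : S.v x = q) :
    ∃ n : ℤ, (minpoly K x).natDegree * q = n := by
  have := S.algClosed
  have hint : IsIntegral K x := (S.algebraic.isAlgebraic x).isIntegral
  have hsplits : ((minpoly K x).map (algebraMap K Kbar)).Splits := IsAlgClosed.splits _
  have hcard : ((minpoly K x).aroots Kbar).card = (minpoly K x).natDegree := by
    rw [← hsplits.natDegree_eq_card_roots, natDegree_map]
  refine exists_intCast_eq_natCast_mul_of_mem_range hx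
    (esymm_aroots_mem_range (minpoly.monic hint) hsplits (minpoly K x).natDegree) ?_
  have hconj (y) (hy : y ∈ (minpoly K x).aroots Kbar) : S.v y = S.v x :=
    (v_eq_of_isConjRoot ((isConjRoot_iff_mem_minpoly_aroots hint).2 hy)).symm
  rw [← hcard, multiset_esymm_card, S.v_multiset_prod, Multiset.map_congr rfl hconj,
    Multiset.map_const', Multiset.sum_replicate]

theorem exists_denominator_dminK {s : Finset Kbar} (hs : 1 < s.card) :
    ∃ N : ℕ, 0 < N ∧ ∀ w, ∃ n : ℤ, dminK S s w = ((n / N : ℚ) : WithTop ℚ) := by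
  have hpos (r : Kbar) : 0 < (minpoly K r).natDegree :=
    minpoly.natDegree_pos (S.algebraic.isAlgebraic r).isIntegral
  have hprod : 0 < ∏ r ∈ s, (minpoly K r).natDegree := Finset.prod_pos fun r _ => hpos r
  refine ⟨_, hprod, fun w => ?_⟩
  obtain ⟨q, hq⟩ := exists_rat_dminK_eq (S := S) (w := w) hs
  obtain ⟨r, hr, hv⟩ := exists_v_sub_eq_dminK (S := S) (w := w)
    (Finset.card_pos.1 (zero_lt_one.trans hs))
  obtain ⟨n, hn⟩ := exists_intCast_eq_natDegree_minpoly_mul (hv.trans hq)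
  rw [minpoly.sub_algebraMap, natDegree_comp, natDegree_X_add_C, mul_one] at hn
  obtain ⟨c, hc⟩ := Finset.dvd_prod_of_mem (fun r => (minpoly K r).natDegree) hr
  refine ⟨n * c, hq.trans (congrArg _ ((eq_div_iff (Nat.cast_pos.2 hprod).ne').2 ?_))⟩
  rw [hc, Int.cast_mul, ← hn]
  push_cast
  ring

theorem exists_isRationalCentre {s : Finset Kbar} (hs : 1 < s.card) :
    ∃ w, IsRationalCentre S s w := by
  obtain ⟨N, hN, hint⟩ := exists_denominator_dminK (S := S) hs
  have hN' : (0 : ℚ) < N := Nat.cast_pos.2 hN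
  obtain ⟨D, hD⟩ := WithTop.ne_top_iff_exists.1 (depth_lt_top (S := S) hs).ne
  have hbdd : ∀ n : ℤ, (∃ w, dminK S s w = ((n / N : ℚ) : WithTop ℚ)) → n ≤ ⌊D * N⌋ := by
    rintro n ⟨w, hw⟩
    have hle : ((n / N : ℚ) : WithTop ℚ) ≤ D := hw ▸ hD ▸ dminK_le_depth
    exact Int.le_floor.2 ((div_le_iff₀ hN').1 (WithTop.coe_le_coe.1 hle))
  obtain ⟨n₀, hn₀⟩ := hint 0
  obtain ⟨n, ⟨w, hw⟩, hmax⟩ := Int.exists_greatest_of_bdd ⟨_, hbdd⟩ ⟨n₀, 0, hn₀⟩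
  refine ⟨w, fun w' => ?_⟩
  obtain ⟨n', hn'⟩ := hint w'
  rw [hw, hn', WithTop.coe_le_coe, div_le_div_iff_of_pos_right hN', Int.cast_le]
  exact hmax n' ⟨w', hn'⟩

end RationalCentre

section Discs

/-- The roots of `f` in the closed disc `v(x - z) ≥ a`. Unlike in `IsCluster`, the intersection may
be empty and `a` may be infinite. -/
noncomputable def rootsInDisc (S : Setup K Kbar) (f : K[X]) (z : Kbar) (a : WithTop ℚ) :
    Finset Kbar :=
  (rootFinset f).filter fun r => a ≤ S.v (r - z)

variable {S : Setup K Kbar} {f : K[X]} {s : Finset Kbar} {r r' : Kbar} {a b : WithTop ℚ}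

theorem mem_rootsInDisc {z : Kbar} :
    r ∈ rootsInDisc S f z a ↔ r ∈ rootFinset f ∧ a ≤ S.v (r - z) :=
  Finset.mem_filter

theorem IsCluster.subset_rootFinset (hs : IsCluster S f s) : s ⊆ rootFinset f := by
  obtain ⟨-, z, δ, rfl⟩ := hs
  exact Finset.filter_subset _ _

theorem self_mem_rootsInDisc (hr : r ∈ rootFinset f) : r ∈ rootsInDisc S f r a :=
  mem_rootsInDisc.2 ⟨hr, by rw [sub_self, S.v_zero]; exact le_top⟩

theorem isCluster_rootsInDisc (hr : r ∈ rootFinset f) (δ : ℚ) :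
    IsCluster S f (rootsInDisc S f r δ) :=
  ⟨⟨r, self_mem_rootsInDisc hr⟩, r, δ, rfl⟩

theorem le_depth_rootsInDisc : a ≤ depth S (rootsInDisc S f r a) :=
  le_depth_of_forall_le_v_sub fun _ hx => (mem_rootsInDisc.1 hx).2

theorem IsCluster.eq_rootsInDisc_depth (hs : IsCluster S f s) (hr : r ∈ s) :
    s = rootsInDisc S f r (depth S s) := by
  refine Finset.Subset.antisymm
    (fun x hx => mem_rootsInDisc.2 ⟨hs.subset_rootFinset hx, depth_le hx hr⟩) fun x hx => ?_
  obtain ⟨-, z, δ, hz⟩ := hs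
  have hmem (y : Kbar) : y ∈ s ↔ y ∈ rootFinset f ∧ (δ : WithTop ℚ) ≤ S.v (y - z) := by
    rw [hz, Finset.mem_filter]
  have hδ : (δ : WithTop ℚ) ≤ depth S s :=
    le_depth_of_forall_le_v_sub fun y hy => ((hmem y).1 hy).2
  obtain ⟨hxf, hxr⟩ := mem_rootsInDisc.1 hx
  refine (hmem x).2 ⟨hxf, ?_⟩
  rw [← sub_add_sub_cancel x r z]
  exact (le_min (hδ.trans hxr) ((hmem r).1 hr).2).trans (S.v_add _ _)

theorem rootsInDisc_eq_of_mem (h : r' ∈ rootsInDisc S f r a) :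
    rootsInDisc S f r' a = rootsInDisc S f r a := by
  have hr' := (mem_rootsInDisc.1 h).2
  ext x
  rw [mem_rootsInDisc, mem_rootsInDisc]
  exact and_congr_right fun _ => ⟨fun hx => Setup.le_v_sub_of_le_sub hx (S.v_sub_comm r' r ▸ hr'),
    fun hx => Setup.le_v_sub_of_le_sub hx hr'⟩

theorem mem_rootFinset (hf : f ≠ 0) : r ∈ (rootFinset f : Finset Kbar) ↔ aeval r f = 0 := by
  rw [rootFinset, Multiset.mem_toFinset, ← aroots_def, mem_aroots]
  exact and_iff_right hf

theorem mem_rootFinset_iff_of_isConjRoot (hf : f ≠ 0) (h : IsConjRoot K r r') :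
    r ∈ (rootFinset f : Finset Kbar) ↔ r' ∈ (rootFinset f : Finset Kbar) := by
  rw [mem_rootFinset hf, mem_rootFinset hf, ← minpoly.dvd_iff, ← minpoly.dvd_iff, h]

theorem card_rootsInDisc_eq_of_isConjRoot (hf : f ≠ 0) (h : IsConjRoot K r r') :
    (rootsInDisc S f r a).card = (rootsInDisc S f r' a).card := by
  have : IsAlgClosure K Kbar := ⟨S.algClosed, S.algebraic⟩
  have : Normal K Kbar := IsAlgClosure.normal K Kbar
  obtain ⟨σ, rfl⟩ := h.symm.exists_algEquiv
  refine Finset.card_equiv σ.toEquiv fun x => ?_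
  have hv : S.v (x - r) = S.v (σ x - σ r) := by
    rw [← map_sub]
    exact v_eq_of_isConjRoot (isConjRoot_of_algEquiv (x - r) σ)
  rw [mem_rootsInDisc, mem_rootsInDisc, hv,
    mem_rootFinset_iff_of_isConjRoot hf (isConjRoot_of_algEquiv x σ)]
  rfl

theorem card_rootsInDisc_dvd_card_rootsInDisc (hf : f ≠ 0) (hab : a ≤ b)
    (hconj : ∀ x ∈ rootsInDisc S f r a, IsConjRoot K r x) :
    (rootsInDisc S f r b).card ∣ (rootsInDisc S f r a).card := by
  rw [Finset.card_eq_sum_card_image (fun x => rootsInDisc S f x b) (rootsInDisc S f r a)]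
  refine Finset.dvd_sum fun u hu => ?_
  obtain ⟨x, hx, rfl⟩ := Finset.mem_image.1 hu
  have hfiber : ((rootsInDisc S f r a).filter fun y => rootsInDisc S f y b = rootsInDisc S f x b)
      = rootsInDisc S f x b := by
    ext y
    rw [Finset.mem_filter]
    refine ⟨fun ⟨hy, h⟩ => h ▸ self_mem_rootsInDisc (mem_rootsInDisc.1 hy).1,
      fun hy => ⟨?_, rootsInDisc_eq_of_mem hy⟩⟩
    rw [← rootsInDisc_eq_of_mem hx]
    exact mem_rootsInDisc.2 ((mem_rootsInDisc.1 hy).imp_right hab.trans)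
  rw [hfiber, card_rootsInDisc_eq_of_isConjRoot hf (hconj x hx)]

end Discs

section AlmostRational

variable {S : Setup K Kbar} {p m : ℕ} {f : K[X]} {s : Finset Kbar} {r : Kbar} {w : K} {ρ : ℚ}
  {a : WithTop ℚ}

theorem sub_algebraMap_mem_separableClosure (hsep : f.Separable) (hr : r ∈ rootFinset f) :
    r - algebraMap K Kbar w ∈ separableClosure K Kbar := by
  have hr' : r ∈ separableClosure K Kbar := mem_separableClosure_iff.2
    (hsep.of_dvd (minpoly.dvd K r ((mem_rootFinset hsep.ne_zero).1 hr)))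
  exact sub_mem hr' (algebraMap_mem _ w)

theorem pow_dvd_card_filter_isConjRoot (hp : p.Prime) (hres : 0 < S.vK (p : K)) (hsep : f.Separable)
    (hr : r ∈ rootFinset f) (hρ : S.v (r - algebraMap K Kbar w) = ρ) (hm : p ^ m ∣ ρ.den) :
    p ^ m ∣
      ((rootFinset f).filter fun x => IsConjRoot K r x ∧ (ρ : WithTop ℚ) < S.v (x - r)).card := by
  set y := r - algebraMap K Kbar w with hy
  have hint : IsIntegral K y := (S.algebraic.isAlgebraic y).isIntegral
  have hysep : (minpoly K y).Separable :=
    mem_separableClosure_iff.1 (sub_algebraMap_mem_separableClosure hsep hr)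
  have hnodup : ((minpoly K y).aroots Kbar).Nodup := nodup_roots hysep.map
  convert pow_dvd_card_filter_conjugates hp hres hρ hm using 1
  rw [← Multiset.toFinset_card_of_nodup (hnodup.filter _)]
  refine Finset.card_equiv (Equiv.subRight (algebraMap K Kbar w)) fun x => ?_
  have hconj : IsConjRoot K r x ↔ IsConjRoot K y (x - algebraMap K Kbar w) :=
    ⟨fun h => h.sub_algebraMap w, fun h => by simpa [hy] using h.add_algebraMap w⟩
  rw [Finset.mem_filter, Multiset.mem_toFinset, Multiset.mem_filter, Equiv.subRight_apply,
    ← isConjRoot_iff_mem_minpoly_aroots hint, ← hconj, hρ, hy, sub_sub_sub_cancel_right]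
  exact and_iff_right_of_imp fun h =>
    (mem_rootFinset_iff_of_isConjRoot hsep.ne_zero h.1).1 hr

theorem padicNorm_pow_self [Fact p.Prime] : padicNorm p ((p ^ m : ℕ) : ℚ) = (p ^ m : ℚ)⁻¹ := by
  rw [Nat.cast_pow, IsAbsoluteValue.abv_pow (padicNorm p), padicNorm.padicNorm_p_of_prime, inv_pow]

theorem padicNorm_le_pow_padicValNat_den [Fact p.Prime] (q : ℚ) :
    padicNorm p q ≤ (p ^ padicValNat p q.den : ℕ) := by
  have hden : padicNorm p q.den = ((p ^ padicValNat p q.den : ℕ) : ℚ)⁻¹ := by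
    rw [padicNorm.eq_zpow_of_nonzero (Nat.cast_ne_zero.2 q.den_nz), padicValRat.of_nat, zpow_neg,
      zpow_natCast, Nat.cast_pow]
  calc padicNorm p q = padicNorm p q.num * (p ^ padicValNat p q.den : ℕ) := by
        rw [← Rat.num_div_den q, padicNorm.div, Rat.num_div_den, hden, div_inv_eq_mul]
    _ ≤ (p ^ padicValNat p q.den : ℕ) :=
        mul_le_of_le_one_left (Nat.cast_nonneg _) (padicNorm.of_int _)

theorem exists_rat_between_gap {α : Type*} (s : Finset α) (g : α → WithTop ℚ) (a : ℚ) :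
    ∃ δ : ℚ, a < δ ∧ ∀ x ∈ s, (a : WithTop ℚ) < g x → (δ : WithTop ℚ) ≤ g x := by
  have hlt : (a : WithTop ℚ) < (s.filter fun x => (a : WithTop ℚ) < g x).inf g :=
    (Finset.lt_inf_iff (WithTop.coe_lt_top a)).2 fun x hx => (Finset.mem_filter.1 hx).2
  obtain ⟨δ, haδ, hδ⟩ := exists_between hlt
  lift δ to ℚ using (hδ.trans_le le_top).ne
  exact ⟨δ, WithTop.coe_lt_coe.1 haδ, fun x hx hax =>
    hδ.le.trans (Finset.inf_le (Finset.mem_filter.2 ⟨hx, hax⟩))⟩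

theorem dminK_rootsInDisc {δ : ℚ} (hr : r ∈ rootFinset f)
    (hρ : S.v (r - algebraMap K Kbar w) = ρ) (hδ : ρ < δ) :
    dminK S (rootsInDisc S f r δ) w = ρ := by
  refine le_antisymm (hρ ▸ dminK_le (self_mem_rootsInDisc hr)) (Finset.le_inf fun x hx => ?_)
  refine (Setup.v_eq_of_lt_sub ?_).trans hρ |>.ge
  rw [sub_sub_sub_cancel_right, hρ]
  exact (WithTop.coe_lt_coe.2 hδ).trans_le (mem_rootsInDisc.1 hx).2

theorem isRationalCentre_of_subset {s t : Finset Kbar} (hw : IsRationalCentre S s w) (hst : s ⊆ t)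
    (h : dminK S t w = dminK S s w) : IsRationalCentre S t w := fun w' =>
  ((Finset.inf_mono hst).trans (hw w')).trans_eq h.symm

theorem AlmostRational.exists_card_rootsInDisc_le (hAR : AlmostRational S f p)
    (hs : IsCluster S f s) (hcard : 1 < s.card) (hw : IsRationalCentre S s w)
    (hρ : dminK S s w = ρ) (hdepth : ρ < depth S s) (hr : r ∈ s) :
    ∃ δ : ℚ, (∀ x ∈ rootFinset f, (ρ : WithTop ℚ) < S.v (x - r) → δ ≤ S.v (x - r)) ∧
      ((rootsInDisc S f r δ).card : ℚ) ≤ padicNorm p ρ := by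
  obtain ⟨δ, hδ, hgap⟩ := exists_rat_between_gap (rootFinset f) (fun x => S.v (x - r)) ρ
  refine ⟨δ, hgap, ?_⟩
  have hrf := hs.subset_rootFinset hr
  have hst : s ⊆ rootsInDisc S f r δ := fun x hx => mem_rootsInDisc.2
    ⟨hs.subset_rootFinset hx, hgap x (hs.subset_rootFinset hx) (hdepth.trans_le (depth_le hx hr))⟩
  have ht : dminK S (rootsInDisc S f r δ) w = ρ :=
    dminK_rootsInDisc hrf ((v_sub_eq_dminK_of_lt_depth (hρ ▸ hdepth) hr).trans hρ) hδ
  by_contra! hlt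
  have hdepth_t := hAR _ (isCluster_rootsInDisc hrf δ)
    (hcard.trans_le (Finset.card_le_card hst)) w ρ
    (isRationalCentre_of_subset hw hst (ht.trans hρ.symm)) ht hlt
  exact (WithTop.coe_lt_coe.2 hδ).not_ge (hdepth_t ▸ le_depth_rootsInDisc)

-- The number of conjugates of `r` in the disc is divisible by the `p`-part of `ρ.den`, which is at
-- least `|ρ|_p`, so there is no room for other roots.
theorem card_rootsInDisc_eq_and_forall_isConjRoot (hp : p.Prime) (hres : 0 < S.vK (p : K))
    (hsep : f.Separable) (hr : r ∈ rootFinset f) (hρ : S.v (r - algebraMap K Kbar w) = ρ)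
    (hgap : ∀ x ∈ rootFinset f, (ρ : WithTop ℚ) < S.v (x - r) → a ≤ S.v (x - r))
    (hle : ((rootsInDisc S f r a).card : ℚ) ≤ padicNorm p ρ) :
    (rootsInDisc S f r a).card = p ^ padicValNat p ρ.den ∧
      ∀ x ∈ rootsInDisc S f r a, IsConjRoot K r x := by
  have := Fact.mk hp
  set t := rootsInDisc S f r a
  set c := (rootFinset f).filter fun x => IsConjRoot K r x ∧ (ρ : WithTop ℚ) < S.v (x - r)
  have hct : c ⊆ t := fun x hx => by
    obtain ⟨hxf, -, hx⟩ := Finset.mem_filter.1 hx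
    exact mem_rootsInDisc.2 ⟨hxf, hgap x hxf hx⟩
  have hrc : r ∈ c := by
    refine Finset.mem_filter.2 ⟨hr, .refl, ?_⟩
    rw [sub_self, S.v_zero]
    exact WithTop.coe_lt_top ρ
  have hpc : p ^ padicValNat p ρ.den ≤ c.card := Nat.le_of_dvd (Finset.card_pos.2 ⟨r, hrc⟩)
    (pow_dvd_card_filter_isConjRoot hp hres hsep hr hρ pow_padicValNat_dvd)
  have htp : t.card ≤ p ^ padicValNat p ρ.den := by
    exact_mod_cast hle.trans (padicNorm_le_pow_padicValNat_den ρ)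
  have hct_eq : c = t := Finset.eq_of_subset_of_card_le hct (htp.trans hpc)
  refine ⟨htp.antisymm (hct_eq ▸ hpc), fun x hx => ?_⟩
  rw [← hct_eq] at hx
  exact (Finset.mem_filter.1 hx).2.1

theorem AlmostRational.exists_card_eq_pow (hAR : AlmostRational S f p) (hp : p.Prime)
    (hres : 0 < S.vK (p : K)) (hsep : f.Separable) (hs : IsCluster S f s) (hcard : 1 < s.card)
    (hw : IsRationalCentre S s w) (hρ : dminK S s w = ρ) (hdepth : ρ < depth S s) :
    ∃ m, s.card = p ^ m := by
  obtain ⟨r, hr⟩ := hs.1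
  obtain ⟨δ, hgap, hle⟩ := hAR.exists_card_rootsInDisc_le hs hcard hw hρ hdepth hr
  obtain ⟨htcard, hconj⟩ := card_rootsInDisc_eq_and_forall_isConjRoot hp hres hsep
    (hs.subset_rootFinset hr) ((v_sub_eq_dminK_of_lt_depth (hρ ▸ hdepth) hr).trans hρ) hgap hle
  have hδ : (δ : WithTop ℚ) ≤ depth S s := le_depth_of_forall_le_v_sub fun x hx =>
    hgap x (hs.subset_rootFinset hx) (hdepth.trans_le (depth_le hx hr))
  have hdvd := card_rootsInDisc_dvd_card_rootsInDisc hsep.ne_zero hδ hconj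
  rw [← hs.eq_rootsInDisc_depth hr, htcard] at hdvd
  obtain ⟨k, -, hk⟩ := (Nat.dvd_prime_pow hp).1 hdvd
  exact ⟨k, hk⟩

end AlmostRational

section PPowerPolynomial

/-- Condition (b) of the theorem: after translation by some `w ∈ K`, the set `s` is the set of
simple roots of a monic polynomial over the separable closure of `K`, of `p`-power degree, whose
constant term has valuation of `p`-adic absolute value at least `1`. -/
def HasPPowerPolynomial (S : Setup K Kbar) (p : ℕ) (s : Finset Kbar) : Prop :=
  ∃ (w : K) (h : Polynomial Kbar), h.Monic ∧
    (∀ i : ℕ, h.coeff i ∈ separableClosure K Kbar) ∧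
    h.roots = s.val.map (fun r => r - algebraMap K Kbar w) ∧
    h.natDegree = s.card ∧ (∃ m : ℕ, s.card = p ^ m) ∧
    ∃ cq : ℚ, S.v (h.coeff 0) = ((cq : ℚ) : WithTop ℚ) ∧ 1 ≤ padicNorm p cq

variable {S : Setup K Kbar} {p m : ℕ} {f : K[X]} {s : Finset Kbar} {w : K} {ρ q : ℚ}

theorem coeff_nodal_mem {R ι : Type*} [CommRing R] (A : Subring R) {s : Finset ι} {v : ι → R}
    (hv : ∀ i ∈ s, v i ∈ A) (n : ℕ) : (Lagrange.nodal s v).coeff n ∈ A := by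
  have hX (i) (hi : i ∈ s) : X - C (v i) ∈ liftsRing A.subtype :=
    sub_mem (X_mem_lifts _) (C'_mem_lifts ⟨⟨_, hv i hi⟩, rfl⟩)
  obtain ⟨c, hc⟩ := (lifts_iff_coeff_lifts _).1 (prod_mem hX) n
  exact hc ▸ c.2

theorem roots_nodal {R ι : Type*} [CommRing R] [IsDomain R] (s : Finset ι) (v : ι → R) :
    (Lagrange.nodal s v).roots = s.val.map v := by
  rw [← roots_multiset_prod_X_sub_C (s.val.map v), Multiset.map_map]
  rfl

theorem eq_nodal_of_roots_eq {R ι : Type*} [CommRing R] [IsDomain R] {s : Finset ι} {v : ι → R}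
    {h : R[X]} (hm : h.Monic) (hroots : h.roots = s.val.map v) (hdeg : h.natDegree = s.card) :
    h = Lagrange.nodal s v := by
  have hcard : h.roots.card = h.natDegree := by
    rw [hroots, Multiset.card_map, hdeg, Finset.card_val]
  rw [← prod_multiset_X_sub_C_of_monic_of_roots_card_eq hm hcard, hroots, Multiset.map_map]
  rfl

theorem v_coeff_zero_nodal (h : dminK S s w < depth S s) (hq : dminK S s w = q) :
    S.v ((Lagrange.nodal s fun r => r - algebraMap K Kbar w).coeff 0) = (s.card * q : ℚ) := by
  have hv (r) (hr : r ∈ s) : S.v (0 - (r - algebraMap K Kbar w)) = q := by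
    rw [zero_sub, S.v_neg, v_sub_eq_dminK_of_lt_depth h hr, hq]
  rw [coeff_zero_eq_eval_zero, Lagrange.eval_nodal, Finset.prod, S.v_multiset_prod,
    Multiset.map_map]
  refine (congrArg Multiset.sum (Multiset.map_congr rfl hv)).trans ?_
  rw [Multiset.map_const', Multiset.sum_replicate, ← WithTop.coe_nsmul, nsmul_eq_mul,
    Finset.card_val]

theorem one_le_padicNorm_pow_mul_iff [Fact p.Prime] :
    1 ≤ padicNorm p ((p ^ m : ℕ) * q) ↔ ((p ^ m : ℕ) : ℚ) ≤ padicNorm p q := by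
  have hpm : (0 : ℚ) < p ^ m := pow_pos (Nat.cast_pos.2 (Fact.out : p.Prime).pos) m
  rw [padicNorm.mul, padicNorm_pow_self, ← div_eq_inv_mul, le_div_iff₀ hpm, one_mul, Nat.cast_pow]

theorem hasPPowerPolynomial_of_card_le_padicNorm (hp : p.Prime) (hsep : f.Separable)
    (hs : s ⊆ rootFinset f) (hcard : s.card = p ^ m) (hρ : dminK S s w = ρ)
    (hdepth : ρ < depth S s) (hle : (s.card : ℚ) ≤ padicNorm p ρ) :
    HasPPowerPolynomial S p s := by
  have := Fact.mk hp
  refine ⟨w, Lagrange.nodal s fun r => r - algebraMap K Kbar w, Lagrange.nodal_monic,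
    coeff_nodal_mem (separableClosure K Kbar).toSubring
      fun r hr => sub_algebraMap_mem_separableClosure hsep (hs hr),
    roots_nodal s _, Lagrange.natDegree_nodal, ⟨m, hcard⟩, _,
    v_coeff_zero_nodal (hρ ▸ hdepth) hρ, ?_⟩
  rw [hcard] at hle ⊢
  exact one_le_padicNorm_pow_mul_iff.2 hle

theorem HasPPowerPolynomial.exists_card_le_padicNorm (hp : p.Prime)
    (h : HasPPowerPolynomial S p s) (hs : ∀ w : K, dminK S s w < depth S s) :
    ∃ (w : K) (q : ℚ), dminK S s w = q ∧ (s.card : ℚ) ≤ padicNorm p q := by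
  have := Fact.mk hp
  obtain ⟨w, h, hmonic, -, hroots, hdeg, ⟨m, hm⟩, cq, hcq, hnorm⟩ := h
  obtain ⟨q, hq⟩ := WithTop.ne_top_iff_exists.1 ((hs w).trans_le le_top).ne
  refine ⟨w, q, hq.symm, ?_⟩
  rw [eq_nodal_of_roots_eq hmonic hroots hdeg, v_coeff_zero_nodal (hs w) hq.symm,
    WithTop.coe_inj] at hcq
  rw [← hcq, hm] at hnorm
  rw [hm]
  exact one_le_padicNorm_pow_mul_iff.1 hnorm

theorem exists_intCast_eq_dminK_of_lt {w' : K} (hs : s.Nonempty)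
    (h : dminK S s w' < dminK S s w) : ∃ n : ℤ, dminK S s w' = ((n : ℚ) : WithTop ℚ) := by
  obtain ⟨r, hr, hv⟩ := exists_v_sub_eq_dminK (S := S) (w := w') hs
  have hww' : S.v (algebraMap K Kbar (w - w')) = dminK S s w' := by
    rw [← hv]
    refine Setup.v_eq_of_lt_sub ?_
    rw [map_sub, sub_sub_sub_cancel_right, S.v_sub_comm _ r, hv]
    exact h.trans_le (dminK_le hr)
  rw [← hww']
  exact Setup.v_eq_intCast_of_mem_range ⟨_, rfl⟩
    fun h0 => (h.trans_le le_top).ne (hww' ▸ (S.v_top_iff _).2 h0)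

theorem HasPPowerPolynomial.card_le_padicNorm (hp : p.Prime) (h : HasPPowerPolynomial S p s)
    (hcard : 1 < s.card) (hw : IsRationalCentre S s w) (hρ : dminK S s w = ρ)
    (hdepth : ∀ w : K, dminK S s w < depth S s) : (s.card : ℚ) ≤ padicNorm p ρ := by
  have := Fact.mk hp
  obtain ⟨w', q, hq, hle⟩ := h.exists_card_le_padicNorm hp hdepth
  rcases (hw w').eq_or_lt with heq | hlt
  · rwa [← WithTop.coe_inj.1 (hρ.symm.trans (heq.symm.trans hq)).symm]
  · obtain ⟨n, hn⟩ :=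
      exists_intCast_eq_dminK_of_lt (Finset.card_pos.1 (zero_lt_one.trans hcard)) hlt
    rw [WithTop.coe_inj.1 (hq.symm.trans hn)] at hle
    exact absurd (hle.trans (padicNorm.of_int n)) (Nat.one_lt_cast.2 hcard).not_ge

end PPowerPolynomial

/-- **Characterisation of almost rational cluster pictures.** `Σ_f` is almost rational iff
every proper cluster `s` satisfies (a) `d_s = ρ_s` (the smallest disc containing `s`
contains a rational point), or (b) after translating by some `w ∈ K` the elements of `s` are
exactly the roots (each of multiplicity one) of a monic polynomial with coefficients in
`K^s`, of `p`-power degree `|s|`, whose constant term `c` satisfies `|v(c)|_p ≥ 1`. -/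
theorem almostRational_iff_disc_characterisation
    (S : Setup K Kbar)
    (p : ℕ) (hp : p.Prime) (hres : ((0 : ℚ) : WithTop ℚ) < S.vK (p : K))
    (f : K[X]) (hsep : f.Separable) (hdeg : 1 ≤ f.natDegree) :
    AlmostRational S f p ↔
      ∀ s : Finset Kbar, IsCluster S f s → 1 < s.card →
        ((∃ w : K, dminK S s w = depth S s) ∨
         (∃ (w : K) (h : Polynomial Kbar), h.Monic ∧
            (∀ i : ℕ, h.coeff i ∈ separableClosure K Kbar) ∧
            h.roots = s.val.map (fun r => r - algebraMap K Kbar w) ∧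
            h.natDegree = s.card ∧ (∃ m : ℕ, s.card = p ^ m) ∧
            ∃ cq : ℚ, S.v (h.coeff 0) = ((cq : ℚ) : WithTop ℚ) ∧ 1 ≤ padicNorm p cq)) := by
  constructor
  · intro hAR s hs hcard
    by_cases ha : ∃ w : K, dminK S s w = depth S s
    · exact Or.inl ha
    obtain ⟨w, hw⟩ := exists_isRationalCentre (S := S) hcard
    obtain ⟨ρ, hρ⟩ := exists_rat_dminK_eq (S := S) (w := w) hcard
    have hdepth : ρ < depth S s := hρ ▸ dminK_le_depth.lt_of_ne fun h => ha ⟨w, h⟩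
    have hle : (s.card : ℚ) ≤ padicNorm p ρ :=
      not_lt.1 fun hlt => hdepth.ne' (hAR s hs hcard w ρ hw hρ hlt)
    obtain ⟨m, hm⟩ := hAR.exists_card_eq_pow hp hres hsep hs hcard hw hρ hdepth
    exact Or.inr (hasPPowerPolynomial_of_card_le_padicNorm hp hsep hs.subset_rootFinset hm hρ
      hdepth hle)
  · intro H s hs hcard w ρ hw hρ hlt
    by_contra hne
    have hdepth (w' : K) : dminK S s w' < depth S s :=
      (hw w').trans_lt (dminK_le_depth.lt_of_ne fun h => hne (h ▸ hρ))
    rcases H s hs hcard with ⟨w', hw'⟩ | hpoly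
    · exact (hdepth w').ne hw'
    · exact hlt.not_ge (HasPPowerPolynomial.card_le_padicNorm hp hpoly hcard hw hρ hdepth)

end ClusterPicture
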